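/- For every n ≥ 3 and every π ∈ NC(n,3), the mingarc statistic has the following closed form: if π has a triple block {a,b,c} with a<b<c then mingarc(π) = n − b − 1; if π has two pair blocks {a,b} and {c,d} with a<b<c<d (disjoint case) then mingarc(π) = 2n − b − d; and if π has two pair blocks {a,b} and {c,d} with a<c<d<b (nested case) then mingarc(π) = n − d − 1. Consequently, on NC(n,3), mingarc(π) = skew(flip(π)), where flip(π) is the noncrossing partition obtained from π by applying the map i ↦ n+1−i to every element. -/

import Mathlib

namespace QtN

/-! ### Lattice paths and parallelogram polyominoes -/

/-- A step of a lattice path: east or north. -/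
inductive Step : Type
  | E : Step
  | N : Step
  deriving DecidableEq, Repr

/-- Number of east steps of a path. -/
def countE (w : List Step) : ℕ := w.count Step.E

/-- Number of north steps of a path. -/
def countN (w : List Step) : ℕ := w.count Step.N

/-- Endpoint of a path started at the origin. -/
def pathPos (w : List Step) : ℕ × ℕ := (countE w, countN w)

/-- The set of lattice points visited by a path started at the origin. -/
def pathPts (w : List Step) : Finset (ℕ × ℕ) :=
  ((List.range (w.length + 1)).map (fun i => pathPos (w.take i))).toFinset

/-- `colHeightsAux w h`: for each east step of `w` (in order), the number of north
steps preceding it, starting with `h` north steps already performed. -/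
def colHeightsAux : List Step → ℕ → List ℕ
  | [], _ => []
  | Step.E :: r, h => h :: colHeightsAux r h
  | Step.N :: r, h => colHeightsAux r (h + 1)

/-- Height at which the path `w` crosses the vertical strip `i ≤ x ≤ i + 1`. -/
def colHeight (w : List Step) (i : ℕ) : ℕ := (colHeightsAux w 0).getD i 0

/-- A parallelogram polyomino of size `m × n`: a pair of monotone lattice paths from
`(0,0)` to `(m,n)` (east/north steps), the upper path staying weakly above the lower
path, and the two paths meeting only at `(0,0)` and `(m,n)`. -/
structure Polyomino (m n : ℕ) : Type where
  lower : List Step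
  upper : List Step
  lowerE : countE lower = m
  lowerN : countN lower = n
  upperE : countE upper = m
  upperN : countN upper = n
  above : ∀ i < m, colHeight lower i ≤ colHeight upper i
  meet : pathPts upper ∩ pathPts lower = {(0, 0), (m, n)}

/-- The area statistic: number of unit squares between the two paths,
minus `(m + n - 1)`. -/
def area {m n : ℕ} (P : Polyomino m n) : ℕ :=
  (∑ i ∈ Finset.range m, (colHeight P.upper i - colHeight P.lower i)) - (m + n - 1)

/-- Where an eastward run at height `y`, starting at `x`, first hits the lower path. -/
def eastTarget (hL : ℕ → ℕ) (m x y : ℕ) : ℕ :=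
  ((List.range m).filter (fun i => decide (x ≤ i ∧ y ≤ hL i))).headD m

/-- Total bounce contribution: from state `(x, y)` just after the `j`-th east-to-north
turn (counting the turns made so far), alternately go north until hitting the upper
path and east until hitting the lower path, each step contributing the number of
east-to-north turns preceding it. -/
def bounceAux (hU hL : ℕ → ℕ) (m n : ℕ) : ℕ → ℕ → ℕ → ℕ → ℕ
  | 0, _, _, _ => 0
  | fuel + 1, x, y, j =>
    if x = m ∧ y = n then 0
    else
      let y' := hU (x - 1)
      let x' := if y' = n then m else eastTarget hL m x y'
      (j + 1) * ((y' - y) + (x' - x)) + bounceAux hU hL m n fuel x' y' (j + 1)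

/-- The bounce statistic of a parallelogram polyomino: the bounce path starts with a
single east step (contributing `0`) and then alternates north runs (to the ceiling)
and east runs (to the floor); each step contributes the number of east-to-north turns
preceding it; finally `(m + n - 1)` is subtracted. -/
def bounce {m n : ℕ} (P : Polyomino m n) : ℕ :=
  bounceAux (colHeight P.upper) (colHeight P.lower) m n (m + n + 2) 1 0 0 - (m + n - 1)

/-! ### Set partitions and noncrossing partitions -/

/-- Maximum of a finite set of naturals (`0` for the empty set). -/
def fmax (β : Finset ℕ) : ℕ := β.sup id

/-- Minimum of a finite set of naturals (`0` for the empty set). -/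
def fmin (β : Finset ℕ) : ℕ := if h : β.Nonempty then β.min' h else 0

/-- A set partition of `{1, …, n}`, given by its finite set of blocks. -/
structure SetPartition (n : ℕ) : Type where
  blocks : Finset (Finset ℕ)
  not_empty_mem : ∅ ∉ blocks
  cover : ∀ i : ℕ, i ∈ Finset.Icc 1 n ↔ ∃ β ∈ blocks, i ∈ β
  disjoint : ∀ β ∈ blocks, ∀ γ ∈ blocks, β ≠ γ → Disjoint β γ

/-- A family of blocks is noncrossing if there are no `a < b < c < d` with
`a, c` in one block and `b, d` in a different block. -/
def IsNoncrossing (bs : Finset (Finset ℕ)) : Prop :=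
  ∀ a b c d : ℕ, a < b → b < c → c < d →
    ∀ β ∈ bs, ∀ γ ∈ bs, a ∈ β → c ∈ β → b ∈ γ → d ∈ γ → β = γ

/-- `NC n k`: noncrossing partitions of `{1, …, n}` with exactly `n - k + 1` blocks. -/
abbrev NC (n k : ℕ) : Type :=
  {P : SetPartition n // IsNoncrossing P.blocks ∧ P.blocks.card = n - k + 1}

/-- The skip statistic: `∑_{β} (max β - min β - |β| + 1)`. -/
def skip (bs : Finset (Finset ℕ)) : ℕ :=
  ∑ β ∈ bs, ((fmax β + 1 - fmin β) - β.card)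

/-- The non-singleton blocks of a partition. -/
def nsBlocks (bs : Finset (Finset ℕ)) : Finset (Finset ℕ) :=
  bs.filter (fun β => 2 ≤ β.card)

/-- The block of `bs` containing `x` (junk if there is not exactly one). -/
def blockContaining (bs : Finset (Finset ℕ)) (x : ℕ) : Finset ℕ :=
  (bs.filter (fun β => x ∈ β)).sup id

/-- For a noncrossing partition in `NC n 3`, the quadruple `(a, b, c, d)` describing its
non-singleton blocks: for two pair blocks `{a,b}` and `{c,d}` (with `a` the global
minimum) this is `(a, b, c, d)`; for a single triple block `{a, b, c}` (`a < b < c`)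
this is `(a, b, b, c)`. -/
def blockQuad (bs : Finset (Finset ℕ)) : ℕ × ℕ × ℕ × ℕ :=
  let A := blockContaining (nsBlocks bs) (fmin ((nsBlocks bs).sup id))
  if (nsBlocks bs).card = 1 then
    let l := A.sort (· ≤ ·)
    (l.getD 0 0, l.getD 1 0, l.getD 1 0, l.getD 2 0)
  else
    let B := ((nsBlocks bs).erase A).sup id
    (fmin A, fmax A, fmin B, fmax B)

/-- The leap statistic on `NC n 3`: `leap(ab|cd) = c - 2 + max(0, c - b)`,
and `leap({a,b,c}) = b - 2` (the case `b = c`). -/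
def leap (bs : Finset (Finset ℕ)) : ℕ :=
  let (_, b, c, _) := blockQuad bs
  (c - 2) + (c - b)

/-- The skew statistic on `NC n 3`: `skew(ab|cd) = c - 2 + a` if `b < c`, else `c - 2`;
`skew({a,b,c}) = b - 2` (the case `b = c`). -/
def skew (bs : Finset (Finset ℕ)) : ℕ :=
  let (a, b, c, _) := blockQuad bs
  if b < c then c - 2 + a else c - 2

/-- The mag statistic on `NC n 3`: `mag(ab|cd) = a + max(b, c) - 2 - ⌈(b - a)/2⌉`,
and `mag({a,b,c}) = a + b - 2 - ⌈(b - a)/2⌉` (the case `b = c`). -/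
def mag (bs : Finset (Finset ℕ)) : ℕ :=
  let (a, b, c, _) := blockQuad bs
  a + max b c - 2 - (b - a + 1) / 2

/-- The area statistic on noncrossing partitions:
`area(π) = ∑_{β, β' ∈ π} #{ i ∈ β' : i < max β < max β' }` (ordered pairs of blocks). -/
def ncArea (bs : Finset (Finset ℕ)) : ℕ :=
  ∑ β ∈ bs, ∑ γ ∈ bs, (γ.filter (fun i => i < fmax β ∧ fmax β < fmax γ)).card

/-- The elements of the non-singleton blocks, listed in increasing order, with
the middle element of a size-3 block listed twice. -/
def nsList (bs : Finset (Finset ℕ)) : List ℕ :=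
  let l := ((nsBlocks bs).sup id).sort (· ≤ ·)
  if l.length = 3 then [l.getD 0 0, l.getD 1 0, l.getD 1 0, l.getD 2 0] else l

/-- The multiset of block sizes of a partition. -/
def blockSizes (bs : Finset (Finset ℕ)) : Multiset ℕ := bs.val.map Finset.card

/-- The image of a partition of `{1, …, n}` under the flip `i ↦ n + 1 - i`. -/
def flipBlocks (n : ℕ) (bs : Finset (Finset ℕ)) : Finset (Finset ℕ) :=
  bs.image (fun β => β.image (fun i => n + 1 - i))

/-! ### The mingarc statistic -/

/-- The gaps `ν_r = m_{r+1} - m_r - 1` between consecutive block minima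
`m_1 < ⋯ < m_h` (with `m_{h+1} = n + 1`). -/
def nuList (n : ℕ) (bs : Finset (Finset ℕ)) : List ℕ :=
  let ms := ((bs.image fmin).sort (· ≤ ·)) ++ [n + 1]
  (List.range (bs.image fmin).card).map (fun r => ms.getD (r + 1) 0 - ms.getD r 0 - 1)

/-- Concatenation of `replicate ν c` over a list of pairs `(c, ν)`. -/
def repeatEach : List (ℕ × ℕ) → List ℕ
  | [] => []
  | p :: r => List.replicate p.2 p.1 ++ repeatEach r

/-- The right endpoints `y_1 ≤ ⋯ ≤ y_{k-1}`: each block maximum `c_r` repeated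
`ν_r` times, in increasing order. -/
def ysList (n : ℕ) (bs : Finset (Finset ℕ)) : List ℕ :=
  repeatEach (List.zip ((bs.image fmax).sort (· ≤ ·)) (nuList n bs))

/-- The left endpoints `x_1 < ⋯ < x_{k-1}`: the elements of `{1, …, n}` that are not
block maxima, in increasing order. -/
def xsList (n : ℕ) (bs : Finset (Finset ℕ)) : List ℕ :=
  ((Finset.Icc 1 n).filter (fun i => i ∉ bs.image fmax)).sort (· ≤ ·)

/-- Greedy left-to-right selection of arcs: keep the first arc, and thereafter keep the
earliest arc whose left endpoint exceeds the right endpoint of the last kept arc. -/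
def greedyArcs : List (ℕ × ℕ) → Option ℕ → List (ℕ × ℕ)
  | [], _ => []
  | a :: rest, none => a :: greedyArcs rest (some a.2)
  | a :: rest, some r =>
      if r < a.1 then a :: greedyArcs rest (some a.2) else greedyArcs rest (some r)

/-- The mingarc statistic: the sum of `n - y_i` over the greedily selected
candidate arcs `[x_i, y_i]`. -/
def mingarc (n : ℕ) (bs : Finset (Finset ℕ)) : ℕ :=
  ((greedyArcs (List.zip (xsList n bs) (ysList n bs)) none).map (fun p => n - p.2)).sum

/-! ### The map η from polyominoes to noncrossing partitions -/

/-- Largest column index `i < m` with `colHeight lower i ≤ j`: the rightmost cell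
adjacent to the floor in row `j`. -/
def eFloor {m k : ℕ} (P : Polyomino m k) (j : ℕ) : ℕ :=
  (((List.range m).filter (fun i => decide (colHeight P.lower i ≤ j))).getLastD 0)

/-- Smallest column index `i` with `colHeight upper i ≥ j + 1`: the leftmost cell
adjacent to the ceiling in row `j` (with default `m - 1`). -/
def fCeil {m k : ℕ} (P : Polyomino m k) (j : ℕ) : ℕ :=
  (((List.range m).filter (fun i => decide (j + 1 ≤ colHeight P.upper i))).headD (m - 1))

/-- The number of cells adjacent to the ceiling in row `j`. -/
def rowCount {m k : ℕ} (P : Polyomino m k) (j : ℕ) : ℕ :=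
  fCeil P (j + 1) - fCeil P j + 1

/-- Pick, `cnt` times, the largest label in `{1, …, L}` not used yet. -/
def pickRow : ℕ → ℕ → Finset ℕ → Finset ℕ
  | 0, _, _ => ∅
  | cnt + 1, L, used =>
      let x := fmax ((Finset.Icc 1 L) \ used)
      insert x (pickRow cnt L (insert x used))

/-- The blocks of `η(P)`: label the cells adjacent to the floor `1, …, n` going bottom
to top, left to right (the label of the floor cell in column `i`, row `j` is
`i + j + 1`, and the labels present in rows `≤ j` are exactly `1, …, eFloor P j + j + 1`);
then going bottom to top, left to right over the cells adjacent to the ceiling, assign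
to each the largest unused indexing label occurring in the same row or below; the
blocks are the label sets of the ceiling rows. -/
def etaBlocks {m k : ℕ} (P : Polyomino m k) : Finset (Finset ℕ) :=
  (((List.range k).foldl
      (fun st j =>
        let B := pickRow (rowCount P j) (eFloor P j + j + 1) st.1
        (st.1 ∪ B, B :: st.2))
      ((∅ : Finset ℕ), ([] : List (Finset ℕ)))).2).toFinset


theorem fmax_eq {β : Finset ℕ} {m : ℕ} (h : m ∈ β) (h2 : ∀ x ∈ β, x ≤ m) : fmax β = m := by
  unfold fmax
  apply le_antisymm
  · exact Finset.sup_le (by simpa using h2)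
  · exact Finset.le_sup (f := id) h

theorem fmin_eq {β : Finset ℕ} {m : ℕ} (h : m ∈ β) (h2 : ∀ x ∈ β, m ≤ x) : fmin β = m := by
  have hne : β.Nonempty := ⟨m, h⟩
  unfold fmin
  rw [dif_pos hne]
  apply le_antisymm
  · exact Finset.min'_le _ _ h
  · exact Finset.le_min' _ _ _ h2

theorem fmax_mem {β : Finset ℕ} (h : β.Nonempty) : fmax β ∈ β := by
  have : fmax β = β.max' h := fmax_eq (Finset.max'_mem _ _) (fun x hx => Finset.le_max' _ _ hx)
  rw [this]; exact Finset.max'_mem _ _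

theorem fmin_mem {β : Finset ℕ} (h : β.Nonempty) : fmin β ∈ β := by
  unfold fmin
  rw [dif_pos h]; exact Finset.min'_mem _ _

theorem sort_map_range (s : Finset ℕ) (m : ℕ) (f : ℕ → ℕ) (hf : StrictMono f)
    (hs : ∀ x, x ∈ s ↔ ∃ i < m, f i = x) : s.sort (· ≤ ·) = (List.range m).map f := by
  have hnd : ((List.range m).map f).Nodup := List.nodup_range.map hf.injective
  have hso : ((List.range m).map f).Pairwise (· ≤ ·) := by
    rw [List.pairwise_map]
    exact List.pairwise_lt_range.imp (fun h => (hf h).le)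
  have : s = ((List.range m).map f).toFinset := by
    ext x; simp [hs]
  rw [this]
  exact (List.toFinset_sort (· ≤ ·) hnd).2 hso

/-- the enumeration of naturals `≥ 1` missing `p < q` -/
def gap (p q i : ℕ) : ℕ := if i + 1 < p then i + 1 else if i + 2 < q then i + 2 else i + 3

theorem gap_strictMono (p q : ℕ) (h : p < q) : StrictMono (gap p q) := by
  intro i j hij
  unfold gap
  split_ifs <;> omega

theorem gap_mem (p q n x : ℕ) (hp : 1 ≤ p) (h : p < q) (hq : q ≤ n) :
    x ∈ Finset.Icc 1 n \ {p, q} ↔ ∃ i < n - 2, gap p q i = x := by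
  simp only [Finset.mem_sdiff, Finset.mem_Icc, Finset.mem_insert, Finset.mem_singleton]
  constructor
  · rintro ⟨⟨h1, h2⟩, h3⟩
    refine ⟨if x < p then x - 1 else if x < q then x - 2 else x - 3, ?_, ?_⟩
    · split_ifs <;> omega
    · unfold gap
      split_ifs <;> omega
  · rintro ⟨i, hi, rfl⟩
    unfold gap
    split_ifs <;> omega

theorem repeatEach_append (l l' : List (ℕ × ℕ)) :
    repeatEach (l ++ l') = repeatEach l ++ repeatEach l' := by
  induction l with
  | nil => rfl
  | cons p r ih => simp [repeatEach, ih]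

theorem repeatEach_range (f : ℕ → ℕ) (u v : ℕ) (h : u ≤ v) (m : ℕ) :
    repeatEach ((List.range m).map
      (fun i => (f i, (if i = u then 1 else 0) + (if i = v then 1 else 0)))) =
    (if u < m then [f u] else []) ++ (if v < m then [f v] else []) := by
  induction m with
  | zero => simp [repeatEach]
  | succ m ih =>
    rw [List.range_succ, List.map_append, repeatEach_append, ih]
    simp only [List.map_cons, List.map_nil, repeatEach, List.append_nil]
    rcases lt_trichotomy m u with h1 | h1 | h1
    · have e1 : ¬ u < m := by omega
      have e2 : ¬ v < m := by omega
      have e3 : ¬ u < m + 1 := by omega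
      have e4 : ¬ v < m + 1 := by omega
      have e5 : ¬ m = u := by omega
      have e6 : ¬ m = v := by omega
      simp [e1, e2, e3, e4, e5, e6]
    · subst h1
      by_cases h2 : m = v
      · subst h2; simp [List.replicate]
      · have e2 : ¬ v < m := by omega
        have e4 : ¬ v < m + 1 := by omega
        simp [e2, e4, h2]
    · have e5 : ¬ m = u := by omega
      have e3 : u < m + 1 := by omega
      by_cases h2 : m = v
      · subst h2; simp [h1, e3, e5]
      · by_cases h3 : v < m
        · have e4 : v < m + 1 := by omega
          simp [h1, e3, e5, h2, h3, e4]
        · have e4 : ¬ v < m + 1 := by omega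
          simp [h1, e3, e5, h2, h3, e4]

theorem mingarc_eq (n : ℕ) (bs : Finset (Finset ℕ)) (p q r s : ℕ)
    (hp : 1 ≤ p) (hpq : p < q) (hqs : q < s) (hpr : p < r) (hrs : r < s) (hs : s ≤ n)
    (hmax : bs.image fmax = Finset.Icc 1 n \ {p, q})
    (hmin : bs.image fmin = Finset.Icc 1 n \ {r, s}) :
    mingarc n bs = if q ≤ r then n - r - 1 else (n - r) + (n - s) := by
  have hM : (bs.image fmax).sort (· ≤ ·) = (List.range (n - 2)).map (gap p q) := by
    rw [hmax]
    exact sort_map_range _ _ _ (gap_strictMono p q hpq)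
      (fun x => gap_mem p q n x hp hpq (by omega))
  have hm : (bs.image fmin).sort (· ≤ ·) = (List.range (n - 2)).map (gap r s) := by
    rw [hmin]
    exact sort_map_range _ _ _ (gap_strictMono r s hrs)
      (fun x => gap_mem r s n x (by omega) hrs hs)
  have hcard : (bs.image fmin).card = n - 2 := by
    rw [← Finset.length_sort (· ≤ ·), hm]; simp
  have hx : xsList n bs = [p, q] := by
    have : (Finset.Icc 1 n).filter (fun i => i ∉ bs.image fmax) = {p, q} := by
      rw [hmax]; ext x
      simp only [Finset.mem_filter, Finset.mem_sdiff, Finset.mem_Icc, Finset.mem_insert,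
        Finset.mem_singleton]
      omega
    unfold xsList
    rw [this]
    have h2 : ({p, q} : Finset ℕ) = [p, q].toFinset := by simp
    rw [h2]
    refine (List.toFinset_sort (· ≤ ·) ?_).2 ?_
    · simp; omega
    · simp; omega
  have hnu : nuList n bs = (List.range (n - 2)).map
      (fun i => (if i = r - 2 then 1 else 0) + (if i = s - 3 then 1 else 0)) := by
    unfold nuList
    simp only [hcard, hm]
    have hlast : (List.range (n - 2)).map (gap r s) ++ [n + 1] =
        (List.range (n - 2 + 1)).map (gap r s) := by
      rw [List.range_succ, List.map_append]
      congr 1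
      simp only [List.map_cons, List.map_nil, gap]
      congr 1
      split_ifs <;> omega
    rw [hlast]
    apply List.map_congr_left
    intro i hi
    rw [List.mem_range] at hi
    have hg : ∀ j < n - 2 + 1, ((List.range (n - 2 + 1)).map (gap r s)).getD j 0 = gap r s j := by
      intro j hj
      rw [List.getD_eq_getElem _ _ (by simpa using hj)]
      simp
    rw [hg _ (by omega), hg _ (by omega)]
    unfold gap
    split_ifs <;> omega
  have hy : ysList n bs = [if q ≤ r then r + 1 else r, s] := by
    unfold ysList
    rw [hM, hnu, List.zip_map', repeatEach_range _ _ _ (by omega), if_pos (by omega),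
      if_pos (by omega)]
    have e1 : gap p q (r - 2) = if q ≤ r then r + 1 else r := by
      unfold gap; split_ifs <;> omega
    have e2 : gap p q (s - 3) = s := by
      unfold gap; split_ifs <;> omega
    rw [e1, e2]; rfl
  unfold mingarc
  rw [hx, hy]
  by_cases h : q ≤ r
  · have : ¬ r + 1 < q := by omega
    simp [h, greedyArcs, this]; omega
  · have : r < q := by omega
    simp [h, greedyArcs, this]

theorem image_fmax (n : ℕ) (π : SetPartition n) (k : ℕ) :
    k ∈ π.blocks.image fmax ↔ k ∈ Finset.Icc 1 n ∧ ∀ β ∈ nsBlocks π.blocks, k ∈ β → fmax β = k := by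
  constructor
  · intro h
    obtain ⟨β, hβ, rfl⟩ := Finset.mem_image.1 h
    have hne : β.Nonempty := by
      rw [Finset.nonempty_iff_ne_empty]; rintro rfl; exact π.not_empty_mem hβ
    have hmem := fmax_mem hne
    refine ⟨(π.cover _).2 ⟨β, hβ, hmem⟩, ?_⟩
    intro γ hγ hk
    by_contra hc
    have hγ' := (Finset.mem_filter.1 hγ).1
    have : β ≠ γ := by rintro rfl; exact hc rfl
    exact Finset.disjoint_left.1 (π.disjoint _ hβ _ hγ' this) hmem hk
  · rintro ⟨h1, h2⟩
    obtain ⟨β, hβ, hk⟩ := (π.cover _).1 h1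
    refine Finset.mem_image.2 ⟨β, hβ, ?_⟩
    by_cases hc : 2 ≤ β.card
    · exact h2 β (Finset.mem_filter.2 ⟨hβ, hc⟩) hk
    · have : β = {k} := by
        symm
        apply Finset.eq_of_subset_of_card_le (by simpa using hk)
        simp; omega
      subst this
      exact fmax_eq (by simp) (by simp)

theorem image_fmin (n : ℕ) (π : SetPartition n) (k : ℕ) :
    k ∈ π.blocks.image fmin ↔ k ∈ Finset.Icc 1 n ∧ ∀ β ∈ nsBlocks π.blocks, k ∈ β → fmin β = k := by
  constructor
  · intro h
    obtain ⟨β, hβ, rfl⟩ := Finset.mem_image.1 h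
    have hne : β.Nonempty := by
      rw [Finset.nonempty_iff_ne_empty]; rintro rfl; exact π.not_empty_mem hβ
    have hmem := fmin_mem hne
    refine ⟨(π.cover _).2 ⟨β, hβ, hmem⟩, ?_⟩
    intro γ hγ hk
    by_contra hc
    have hγ' := (Finset.mem_filter.1 hγ).1
    have : β ≠ γ := by rintro rfl; exact hc rfl
    exact Finset.disjoint_left.1 (π.disjoint _ hβ _ hγ' this) hmem hk
  · rintro ⟨h1, h2⟩
    obtain ⟨β, hβ, hk⟩ := (π.cover _).1 h1
    refine Finset.mem_image.2 ⟨β, hβ, ?_⟩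
    by_cases hc : 2 ≤ β.card
    · exact h2 β (Finset.mem_filter.2 ⟨hβ, hc⟩) hk
    · have : β = {k} := by
        symm
        apply Finset.eq_of_subset_of_card_le (by simpa using hk)
        simp; omega
      subst this
      exact fmin_eq (by simp) (by simp)

theorem sum_ns (n : ℕ) (hn : 3 ≤ n) (π : NC n 3) :
    ∑ β ∈ nsBlocks π.val.blocks, (β.card - 1) = 2 := by
  obtain ⟨π, hnc, hcard⟩ := π
  simp only
  have h1 : ∑ β ∈ nsBlocks π.blocks, (β.card - 1) = ∑ β ∈ π.blocks, (β.card - 1) := by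
    apply Finset.sum_subset (Finset.filter_subset _ _)
    intro β hβ h
    simp only [nsBlocks, Finset.mem_filter, not_and] at h
    have := h hβ
    omega
  have h2 : ∑ β ∈ π.blocks, β.card = n := by
    have hu : π.blocks.biUnion id = Finset.Icc 1 n := by
      ext i; rw [π.cover]; simp
    have := Finset.card_biUnion (s := π.blocks) (t := id)
      (fun β hβ γ hγ h => π.disjoint β hβ γ hγ h)
    rw [hu] at this
    simpa using this.symm
  have h3 : ∑ β ∈ π.blocks, (β.card - 1) + π.blocks.card = n := by
    rw [Finset.card_eq_sum_ones, ← Finset.sum_add_distrib]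
    refine Eq.trans ?_ h2
    apply Finset.sum_congr rfl
    intro β hβ
    have hne : β.Nonempty := by
      rw [Finset.nonempty_iff_ne_empty]; rintro rfl; exact π.not_empty_mem hβ
    have := hne.card_pos
    omega
  omega

theorem ns_of_subset (n : ℕ) (hn : 3 ≤ n) (π : NC n 3) (T : Finset (Finset ℕ))
    (hT : T ⊆ nsBlocks π.val.blocks) (hs : ∑ β ∈ T, (β.card - 1) = 2) :
    nsBlocks π.val.blocks = T := by
  have h := sum_ns n hn π
  rw [← Finset.sum_sdiff hT, hs] at h
  have h0 : ∑ β ∈ nsBlocks π.val.blocks \ T, (β.card - 1) = 0 := by omega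
  rw [Finset.sum_eq_zero_iff] at h0
  apply Finset.Subset.antisymm _ hT
  intro β hβ
  by_contra hc
  have h1 := h0 β (Finset.mem_sdiff.2 ⟨hβ, hc⟩)
  have h2 := (Finset.mem_filter.1 hβ).2
  omega

theorem ns_triple (n : ℕ) (hn : 3 ≤ n) (π : NC n 3) (a b c : ℕ) (hab : a < b) (hbc : b < c)
    (h : ({a, b, c} : Finset ℕ) ∈ π.val.blocks) : nsBlocks π.val.blocks = {{a, b, c}} := by
  have hc : ({a, b, c} : Finset ℕ).card = 3 :=
    Finset.card_eq_three.2 ⟨a, b, c, by omega, by omega, by omega, rfl⟩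
  apply ns_of_subset n hn
  · rw [Finset.singleton_subset_iff]
    exact Finset.mem_filter.2 ⟨h, by omega⟩
  · rw [Finset.sum_singleton, hc]

theorem ns_pairs (n : ℕ) (hn : 3 ≤ n) (π : NC n 3) (a b c d : ℕ) (hab : a < b) (hcd : c < d)
    (hac : a < c)
    (h : ({a, b} : Finset ℕ) ∈ π.val.blocks) (h' : ({c, d} : Finset ℕ) ∈ π.val.blocks) :
    nsBlocks π.val.blocks = {{a, b}, {c, d}} := by
  have hc : ({a, b} : Finset ℕ).card = 2 := Finset.card_pair (by omega)
  have hc' : ({c, d} : Finset ℕ).card = 2 := Finset.card_pair (by omega)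
  have hne : ({a, b} : Finset ℕ) ≠ {c, d} := by
    intro e
    have : a ∈ ({c, d} : Finset ℕ) := by rw [← e]; simp
    simp at this; omega
  apply ns_of_subset n hn
  · intro x hx
    simp only [Finset.mem_insert, Finset.mem_singleton] at hx
    rcases hx with rfl | rfl
    · exact Finset.mem_filter.2 ⟨h, by omega⟩
    · exact Finset.mem_filter.2 ⟨h', by omega⟩
  · rw [Finset.sum_pair hne, hc, hc']

theorem fmax_pair {a b : ℕ} (h : a < b) : fmax {a, b} = b := fmax_eq (by simp) (by simp; omega)
theorem fmin_pair {a b : ℕ} (h : a < b) : fmin {a, b} = a := fmin_eq (by simp) (by simp; omega)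
theorem fmax_triple {a b c : ℕ} (h : a < b) (h' : b < c) : fmax {a, b, c} = c :=
  fmax_eq (by simp) (by simp; omega)
theorem fmin_triple {a b c : ℕ} (h : a < b) (h' : b < c) : fmin {a, b, c} = a :=
  fmin_eq (by simp) (by simp; omega)

theorem block_range (n : ℕ) (π : SetPartition n) {β : Finset ℕ} (hβ : β ∈ π.blocks) {x : ℕ}
    (hx : x ∈ β) : 1 ≤ x ∧ x ≤ n := Finset.mem_Icc.1 ((π.cover x).2 ⟨β, hβ, hx⟩)

theorem mingarc_triple (n : ℕ) (hn : 3 ≤ n) (π : NC n 3) (a b c : ℕ) (hab : a < b) (hbc : b < c)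
    (h : ({a, b, c} : Finset ℕ) ∈ π.val.blocks) : mingarc n π.val.blocks = n - b - 1 := by
  have hns := ns_triple n hn π a b c hab hbc h
  have ha := block_range n π.val h (x := a) (by simp)
  have hc := block_range n π.val h (x := c) (by simp)
  rw [mingarc_eq n _ a b b c ha.1 hab hbc hab hbc hc.2, if_pos le_rfl]
  · ext k
    rw [image_fmax, hns]
    simp [fmax_triple hab hbc]
    omega
  · ext k
    rw [image_fmin, hns]
    simp [fmin_triple hab hbc]
    omega

theorem mingarc_pairs (n : ℕ) (hn : 3 ≤ n) (π : NC n 3) (a b c d : ℕ) (hab : a < b)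
    (hcd : c < d) (hac : a < c)
    (hh : b < c ∨ d < b)
    (h : ({a, b} : Finset ℕ) ∈ π.val.blocks) (h' : ({c, d} : Finset ℕ) ∈ π.val.blocks) :
    mingarc n π.val.blocks = if b < c then 2 * n - b - d else n - d - 1 := by
  have hns := ns_pairs n hn π a b c d hab hcd hac h h'
  have ha := block_range n π.val h (x := a) (by simp)
  have hb := block_range n π.val h (x := b) (by simp)
  have hd := block_range n π.val h' (x := d) (by simp)
  rw [mingarc_eq n _ a c (min b d) (max b d) ha.1 hac (by omega) (by omega) (by omega) (by omega)]
  · split_ifs <;> omega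
  · ext k
    rw [image_fmax, hns]
    simp [fmax_pair hab, fmax_pair hcd]
    omega
  · ext k
    rw [image_fmin, hns]
    simp [fmin_pair hab, fmin_pair hcd]
    omega

theorem skew_triple (bs : Finset (Finset ℕ)) (a b c : ℕ) (hab : a < b) (hbc : b < c)
    (h : nsBlocks bs = {{a, b, c}}) : skew bs = b - 2 := by
  have hA : blockContaining {{a, b, c}} a = {a, b, c} := by
    unfold blockContaining
    rw [Finset.filter_singleton, if_pos (by simp)]; simp
  have hsort : ({a, b, c} : Finset ℕ).sort (· ≤ ·) = [a, b, c] := by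
    have h2 : ({a, b, c} : Finset ℕ) = [a, b, c].toFinset := by simp
    rw [h2]
    refine (List.toFinset_sort (· ≤ ·) ?_).2 ?_
    · simp; omega
    · simp; omega
  have hq : blockQuad bs = (a, b, b, c) := by
    unfold blockQuad
    rw [h]
    simp only [Finset.sup_singleton, id, fmin_triple hab hbc, hA, Finset.card_singleton, if_true,
      hsort]
    rfl
  unfold skew
  rw [hq]
  simp

theorem skew_pairs (bs : Finset (Finset ℕ)) (a b c d : ℕ) (hab : a < b) (hcd : c < d)
    (hac : a < c) (h : nsBlocks bs = {{a, b}, {c, d}}) :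
    skew bs = if b < c then c - 2 + a else c - 2 := by
  have hne : ({a, b} : Finset ℕ) ≠ {c, d} := by
    intro e
    have : a ∈ ({c, d} : Finset ℕ) := by rw [← e]; simp
    simp at this; omega
  have hA : blockContaining {{a, b}, {c, d}} a = {a, b} := by
    unfold blockContaining
    rw [Finset.filter_insert, if_pos (by simp), Finset.filter_singleton,
      if_neg (by simp; omega)]; simp
  have hm : fmin (({{a, b}, {c, d}} : Finset (Finset ℕ)).sup id) = a := by
    apply fmin_eq
    · simp
    · simp; omega
  have hB : (({{a, b}, {c, d}} : Finset (Finset ℕ)).erase {a, b}).sup id = {c, d} := by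
    rw [Finset.erase_insert (by simpa using hne)]; simp
  have hq : blockQuad bs = (a, b, c, d) := by
    unfold blockQuad
    rw [h]
    simp only [hm, hA, hB, Finset.card_pair hne, fmin_pair hab, fmax_pair hab, fmin_pair hcd,
      fmax_pair hcd]
    rfl
  unfold skew
  rw [hq]

theorem ns_flip (n : ℕ) (π : SetPartition n) :
    nsBlocks (flipBlocks n π.blocks) = flipBlocks n (nsBlocks π.blocks) := by
  have hc : ∀ β ∈ π.blocks, (β.image (fun i => n + 1 - i)).card = β.card := by
    intro β hβ
    apply Finset.card_image_of_injOn
    intro x hx y hy hxy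
    have h1 := block_range n π hβ hx
    have h2 := block_range n π hβ hy
    simp only at hxy
    omega
  unfold nsBlocks flipBlocks
  rw [Finset.filter_image]
  congr 1
  apply Finset.filter_congr
  intro β hβ
  rw [hc β hβ]

theorem classify (n : ℕ) (hn : 3 ≤ n) (π : NC n 3) :
    (∃ a b c, a < b ∧ b < c ∧ ({a, b, c} : Finset ℕ) ∈ π.val.blocks) ∨
    (∃ a b c d, a < b ∧ c < d ∧ a < c ∧ (b < c ∨ d < b) ∧
      ({a, b} : Finset ℕ) ∈ π.val.blocks ∧ ({c, d} : Finset ℕ) ∈ π.val.blocks) := by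
  have hs := sum_ns n hn π
  have hge : ∀ β ∈ nsBlocks π.val.blocks, 1 ≤ β.card - 1 := by
    intro β hβ
    have := (Finset.mem_filter.1 hβ).2
    omega
  have hle : (nsBlocks π.val.blocks).card ≤ 2 := by
    rw [← hs, Finset.card_eq_sum_ones]
    exact Finset.sum_le_sum hge
  have hpair : ∀ β : Finset ℕ, β.card = 2 → ∃ a b, a < b ∧ β = {a, b} := by
    intro β hβ
    obtain ⟨x, y, hxy, rfl⟩ := Finset.card_eq_two.1 hβ
    rcases lt_or_gt_of_ne hxy with h | h
    · exact ⟨x, y, h, rfl⟩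
    · exact ⟨y, x, h, Finset.pair_comm _ _⟩
  have h0 : (nsBlocks π.val.blocks).card = 0 ∨ (nsBlocks π.val.blocks).card = 1 ∨
    (nsBlocks π.val.blocks).card = 2 := by omega
  rcases h0 with h0 | h0 | h0
  · rw [Finset.card_eq_zero] at h0
    rw [h0] at hs
    simp at hs
  · left
    obtain ⟨β, hβ⟩ := Finset.card_eq_one.1 h0
    have hmem : β ∈ π.val.blocks := by
      have : β ∈ nsBlocks π.val.blocks := by rw [hβ]; simp
      exact (Finset.mem_filter.1 this).1
    rw [hβ, Finset.sum_singleton] at hs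
    have h3 : β.card = 3 := by omega
    have hlen : (β.sort (· ≤ ·)).length = 3 := by rw [Finset.length_sort, h3]
    obtain ⟨a, b, c, habc⟩ := List.length_eq_three.1 hlen
    have hlt : (β.sort (· ≤ ·)).Pairwise (· < ·) := (Finset.sortedLT_sort β).pairwise
    rw [habc] at hlt
    simp at hlt
    refine ⟨a, b, c, hlt.1.1, hlt.2, ?_⟩
    have : β = {a, b, c} := by
      rw [← Finset.sort_toFinset β (· ≤ ·), habc]; simp
    rwa [← this]
  · right
    obtain ⟨β, γ, hne, hβγ⟩ := Finset.card_eq_two.1 h0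
    have hβ' : β ∈ nsBlocks π.val.blocks := by rw [hβγ]; simp
    have hγ' : γ ∈ nsBlocks π.val.blocks := by rw [hβγ]; simp
    have hβ := (Finset.mem_filter.1 hβ').1
    have hγ := (Finset.mem_filter.1 hγ').1
    have g1 := hge β hβ'
    have g2 := hge γ hγ'
    rw [hβγ, Finset.sum_pair hne] at hs
    obtain ⟨a, b, hab, rfl⟩ := hpair β (by omega)
    obtain ⟨c, d, hcd, rfl⟩ := hpair γ (by omega)
    have hd := π.val.disjoint _ hβ _ hγ hne
    simp at hd
    have key : ∀ a b c d : ℕ, a < b → c < d → a < c → b ≠ c → b ≠ d →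
        ({a, b} : Finset ℕ) ≠ {c, d} →
        ({a, b} : Finset ℕ) ∈ π.val.blocks → ({c, d} : Finset ℕ) ∈ π.val.blocks →
        b < c ∨ d < b := by
      intro a b c d hab hcd hac hbc hbd hne h1 h2
      by_contra hcon
      exact hne (π.prop.1 a c b d hac (by omega) (by omega) _ h1 _ h2 (by simp) (by simp)
        (by simp) (by simp))
    rcases lt_trichotomy a c with h | h | h
    · exact ⟨a, b, c, d, hab, hcd, h,
        key a b c d hab hcd h (by omega) (by omega) hne hβ hγ, hβ, hγ⟩
    · omega
    · exact ⟨c, d, a, b, hcd, hab, h,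
        key c d a b hcd hab h (by omega) (by omega) hne.symm hγ hβ, hγ, hβ⟩

theorem mingarc_skew (n : ℕ) (hn : 3 ≤ n) (π : NC n 3) :
    mingarc n π.val.blocks = skew (flipBlocks n π.val.blocks) := by
  rcases classify n hn π with ⟨a, b, c, hab, hbc, h⟩ | ⟨a, b, c, d, hab, hcd, hac, hh, h, h'⟩
  · rw [mingarc_triple n hn π a b c hab hbc h]
    have hc := block_range n π.val h (x := c) (by simp)
    rw [skew_triple _ (n + 1 - c) (n + 1 - b) (n + 1 - a) (by omega) (by omega)]
    · omega
    · rw [ns_flip, ns_triple n hn π a b c hab hbc h]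
      simp only [flipBlocks, Finset.image_singleton, Finset.image_insert]
      congr 1
      ext x
      simp only [Finset.mem_insert, Finset.mem_singleton]
      tauto
  · rw [mingarc_pairs n hn π a b c d hab hcd hac hh h h']
    have hb := block_range n π.val h (x := b) (by simp)
    have hd := block_range n π.val h' (x := d) (by simp)
    have hf : nsBlocks (flipBlocks n π.val.blocks) =
        {{n + 1 - b, n + 1 - a}, {n + 1 - d, n + 1 - c}} := by
      rw [ns_flip, ns_pairs n hn π a b c d hab hcd hac h h']
      simp only [flipBlocks, Finset.image_singleton, Finset.image_insert]
      rw [Finset.pair_comm (n + 1 - a), Finset.pair_comm (n + 1 - c)]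
    rcases hh with hh | hh
    · rw [Finset.pair_comm] at hf
      rw [skew_pairs _ _ _ _ _ (by omega) (by omega) (by omega) hf]
      split_ifs <;> omega
    · rw [skew_pairs _ _ _ _ _ (by omega) (by omega) (by omega) hf]
      split_ifs <;> omega

/-- Closed form of the mingarc statistic on `NC(n,3)` for `n ≥ 3`:
for a triple block `{a,b,c}` (`a<b<c`), `mingarc π = n - b - 1`; for two disjoint pair
blocks `{a,b}, {c,d}` (`a<b<c<d`), `mingarc π = 2n - b - d`; for nested pair blocks
`{a,b}, {c,d}` (`a<c<d<b`), `mingarc π = n - d - 1`. Consequently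
`mingarc π = skew (flip π)`, where `flip` applies `i ↦ n + 1 - i` to every element. -/
theorem mingarc_closed_form (n : ℕ) (hn : 3 ≤ n) (π : NC n 3) :
    (∀ a b c : ℕ, a < b → b < c → ({a, b, c} : Finset ℕ) ∈ π.val.blocks →
      mingarc n π.val.blocks = n - b - 1) ∧
    (∀ a b c d : ℕ, a < b → b < c → c < d →
      ({a, b} : Finset ℕ) ∈ π.val.blocks → ({c, d} : Finset ℕ) ∈ π.val.blocks →
      mingarc n π.val.blocks = 2 * n - b - d) ∧
    (∀ a b c d : ℕ, a < c → c < d → d < b →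
      ({a, b} : Finset ℕ) ∈ π.val.blocks → ({c, d} : Finset ℕ) ∈ π.val.blocks →
      mingarc n π.val.blocks = n - d - 1) ∧
    mingarc n π.val.blocks = skew (flipBlocks n π.val.blocks) := by
  refine ⟨mingarc_triple n hn π, ?_, ?_, mingarc_skew n hn π⟩
  · intro a b c d hab hbc hcd h h'
    rw [mingarc_pairs n hn π a b c d hab hcd (by omega) (Or.inl hbc) h h', if_pos hbc]
  · intro a b c d hac hcd hdb h h'
    rw [mingarc_pairs n hn π a b c d (by omega) hcd hac (Or.inr hdb) h h', if_neg (by omega)]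

end QtN
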